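/- arXiv:0911.2797 — 3 statements merged into one kernel-verified Lean document; each statement's English description precedes it below -/
import Mathlib

section
/- Let a,b,c,d,e,f,g,h,i,j,k,l,m,n,p,q,r,s be 18 complex numbers with (fs−ip)·(gr−hq) ≠ 0. If there exist vectors x, y ∈ ℂ³ and complex numbers A₁, A₂, A₃, A₄ such that x⊗y = A₁v₁ + A₂v₂ + A₃v₃ + A₄v₄, then (cA₁ + lA₃)·(λA₁ + μA₃) = 0. -/
open Complex ComplexConjugate
open scoped ComplexOrder

noncomputable section

/-- The "odd" checkerboard vector with entries at positions (0,0),(2,0),(1,1),(0,2),(2,2). -/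
def oddVec (a b c d e : ℂ) : Fin 3 × Fin 3 → ℂ := fun u =>
  if u = (0, 0) then a else if u = (2, 0) then b else if u = (1, 1) then c
  else if u = (0, 2) then d else if u = (2, 2) then e else 0

/-- The "even" checkerboard vector with entries at positions (1,0),(0,1),(2,1),(1,2). -/
def evenVec (f g h i : ℂ) : Fin 3 × Fin 3 → ℂ := fun u =>
  if u = (1, 0) then f else if u = (0, 1) then g else if u = (2, 1) then h
  else if u = (1, 2) then i else 0

/-- Tensor product of two vectors of ℂ³, as a function on Fin 3 × Fin 3. -/
def tp (x y : Fin 3 → ℂ) : Fin 3 × Fin 3 → ℂ := fun u => x u.1 * y u.2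

/-- λ = a(hs−ir)+b(iq−gs)+d(fr−hp)+e(gp−fq). -/
def lamP (a b d e f g h i p q r s : ℂ) : ℂ :=
  a * (h * s - i * r) + b * (i * q - g * s) + d * (f * r - h * p) + e * (g * p - f * q)

/-- μ = f(mr−nq)+g(np−ks)+h(js−mp)+i(kq−jr). -/
def muP (f g h i j k m n p q r s : ℂ) : ℂ :=
  f * (m * r - n * q) + g * (n * p - k * s) + h * (j * s - m * p) + i * (k * q - j * r)

theorem stmt3 (a b c d e f g h i j k l m n p q r s : ℂ)
    (hcond : (f * s - i * p) * (g * r - h * q) ≠ 0)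
    (x y : Fin 3 → ℂ) (A₁ A₂ A₃ A₄ : ℂ)
    (hxy : tp x y = A₁ • oddVec a b c d e + A₂ • evenVec f g h i
      + A₃ • oddVec j k l m n + A₄ • evenVec p q r s) :
    (c * A₁ + l * A₃) *
      (lamP a b d e f g h i p q r s * A₁ + muP f g h i j k m n p q r s * A₃) = 0 := by
  have h00 := congrFun hxy (0, 0)
  have h20 := congrFun hxy (2, 0)
  have h11 := congrFun hxy (1, 1)
  have h02 := congrFun hxy (0, 2)
  have h22 := congrFun hxy (2, 2)
  have h10 := congrFun hxy (1, 0)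
  have h01 := congrFun hxy (0, 1)
  have h21 := congrFun hxy (2, 1)
  have h12 := congrFun hxy (1, 2)
  simp [tp, oddVec, evenVec] at h00 h20 h11 h02 h22 h10 h01 h21 h12
  have e1 : (A₁ * c + A₃ * l) * (A₁ * a + A₃ * j)
      = (A₂ * f + A₄ * p) * (A₂ * g + A₄ * q) := by
    rw [← h11, ← h00, ← h10, ← h01]; ring
  have e2 : (A₁ * c + A₃ * l) * (A₁ * b + A₃ * k)
      = (A₂ * f + A₄ * p) * (A₂ * h + A₄ * r) := by
    rw [← h11, ← h20, ← h10, ← h21]; ring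
  have e3 : (A₁ * c + A₃ * l) * (A₁ * d + A₃ * m)
      = (A₂ * i + A₄ * s) * (A₂ * g + A₄ * q) := by
    rw [← h11, ← h02, ← h12, ← h01]; ring
  have e4 : (A₁ * c + A₃ * l) * (A₁ * e + A₃ * n)
      = (A₂ * i + A₄ * s) * (A₂ * h + A₄ * r) := by
    rw [← h11, ← h22, ← h12, ← h21]; ring
  unfold lamP muP
  linear_combination (h * s - i * r) * e1 + (i * q - g * s) * e2
    + (f * r - h * p) * e3 + (g * p - f * q) * e4
end
end

section
/- Let ρ₁ be the state obtained from the checkerboard construction with parameters a=f=k=n=q=s=0, g=p=m=1, j=l=−1, h=i=𝐢, e=1−𝐢, b=d=−1+𝐢, c=r=−1−𝐢 (where 𝐢 is the imaginary unit; here N = 17). Then det(ρ₁^Γ) = 2⁶·7/17⁹ (in particular ρ₁^Γ is nonsingular), and ρ₁^Γ, which is a Hermitian 9×9 matrix, has exactly two negative eigenvalues (counted with multiplicity); in particular ρ₁ is an NPT state. -/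
open Complex ComplexConjugate
open scoped ComplexOrder

noncomputable section

/-- σ = Σ_{t=1}^4 v_t v_t†, a 9×9 complex matrix. -/
def sigmaM (a b c d e f g h i j k l m n p q r s : ℂ) :
    Matrix (Fin 3 × Fin 3) (Fin 3 × Fin 3) ℂ :=
  Matrix.of fun u w =>
    oddVec a b c d e u * conj (oddVec a b c d e w)
      + evenVec f g h i u * conj (evenVec f g h i w)
      + oddVec j k l m n u * conj (oddVec j k l m n w)
      + evenVec p q r s u * conj (evenVec p q r s w)

/-- N = Σ_{t=1}^4 ‖v_t‖². -/
def Nval (a b c d e f g h i j k l m n p q r s : ℂ) : ℝ :=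
  ∑ u : Fin 3 × Fin 3,
    (‖oddVec a b c d e u‖ ^ 2 + ‖evenVec f g h i u‖ ^ 2
      + ‖oddVec j k l m n u‖ ^ 2 + ‖evenVec p q r s u‖ ^ 2)

/-- ρ = (1/N) Σ_{t=1}^4 v_t v_t†. -/
def rhoM (a b c d e f g h i j k l m n p q r s : ℂ) :
    Matrix (Fin 3 × Fin 3) (Fin 3 × Fin 3) ℂ :=
  ((Nval a b c d e f g h i j k l m n p q r s : ℂ))⁻¹
    • sigmaM a b c d e f g h i j k l m n p q r s

/-- The partial transpose: (M^Γ)_{(i,j),(k,l)} = M_{(i,l),(k,j)}. -/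
def ptrans (M : Matrix (Fin 3 × Fin 3) (Fin 3 × Fin 3) ℂ) :
    Matrix (Fin 3 × Fin 3) (Fin 3 × Fin 3) ℂ :=
  Matrix.of fun u w => M (u.1, w.2) (w.1, u.2)

/-- The state ρ₁: parameters a=f=k=n=q=s=0, g=p=m=1, j=l=−1, h=i=𝐢, e=1−𝐢,
b=d=−1+𝐢, c=r=−1−𝐢. -/
def rho1 : Matrix (Fin 3 × Fin 3) (Fin 3 × Fin 3) ℂ :=
  rhoM 0 (-1 + I) (-1 - I) (-1 + I) (1 - I) 0 1 I I (-1) 0 (-1) 1 0 1 0 (-1 - I) 0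

/-- Half of the Sylvester law of inertia (sign `ε`). -/
theorem inertia_half {ι κ : Type} [Fintype ι] [DecidableEq ι] [Fintype κ] [DecidableEq κ]
    (lam : ι → ℝ) (d : κ → ℝ) (M : Matrix κ ι ℂ)
    (h : Matrix.diagonal (fun i => (lam i : ℂ)) =
      M.conjTranspose * Matrix.diagonal (fun k => (d k : ℂ)) * M) (ε : ℝ) :
    Fintype.card {i // ε * lam i < 0} ≤ Fintype.card {k // ε * d k < 0} := by
  classical
  by_contra hlt
  push Not at hlt
  let ext : ({i // ε * lam i < 0} → ℂ) →ₗ[ℂ] (ι → ℂ) :=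
    { toFun := fun c i => if hi : ε * lam i < 0 then c ⟨i, hi⟩ else 0
      map_add' := by intro x y; funext i; by_cases hi : ε * lam i < 0 <;> simp [hi]
      map_smul' := by intro a x; funext i; by_cases hi : ε * lam i < 0 <;> simp [hi] }
  let T : ({i // ε * lam i < 0} → ℂ) →ₗ[ℂ] ({k // ε * d k < 0} → ℂ) :=
    (LinearMap.funLeft ℂ ℂ (Subtype.val : {k // ε * d k < 0} → κ)) ∘ₗ M.mulVecLin ∘ₗ ext
  have hker : LinearMap.ker T ≠ ⊥ := LinearMap.ker_ne_bot_of_finrank_lt (by simpa using hlt)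
  obtain ⟨c, hc, hc0⟩ := (Submodule.ne_bot_iff _).1 hker
  set y := ext c with hy
  have hz : ∀ k, ε * d k < 0 → (M.mulVec y) k = 0 := fun k hk =>
    congrFun (LinearMap.mem_ker.1 hc) ⟨k, hk⟩
  have hq : star y ⬝ᵥ (Matrix.diagonal (fun i => (lam i : ℂ))).mulVec y =
      star (M.mulVec y) ⬝ᵥ (Matrix.diagonal (fun k => (d k : ℂ))).mulVec (M.mulVec y) := by
    rw [h, Matrix.star_mulVec, ← Matrix.dotProduct_mulVec, Matrix.mulVec_mulVec,
      Matrix.mulVec_mulVec, Matrix.mul_assoc]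
  have key : ∀ {α : Type} [Fintype α] [DecidableEq α] (f : α → ℝ) (x : α → ℂ),
      star x ⬝ᵥ (Matrix.diagonal (fun i => (f i : ℂ))).mulVec x =
        ((∑ i, f i * normSq (x i) : ℝ) : ℂ) := by
    intro α _ _ f x
    simp only [dotProduct, Matrix.mulVec_diagonal, Pi.star_apply, Complex.ofReal_sum,
      Complex.ofReal_mul, Complex.normSq_eq_conj_mul_self, RCLike.star_def]
    exact Finset.sum_congr rfl fun i _ => by ring
  rw [key, key] at hq
  have hq' := congrArg (fun t => ε * t) (Complex.ofReal_injective hq)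
  simp only [Finset.mul_sum, ← mul_assoc] at hq'
  have h1 : 0 ≤ ∑ k, ε * d k * normSq (M.mulVec y k) := by
    refine Finset.sum_nonneg fun k _ => ?_
    by_cases hk : ε * d k < 0
    · simp [hz k hk]
    · exact mul_nonneg (not_lt.1 hk) (normSq_nonneg _)
  have h2 : ∑ i, ε * lam i * normSq (y i) < 0 := by
    refine Finset.sum_neg' (fun i _ => ?_) ?_
    · by_cases hi : ε * lam i < 0
      · exact mul_nonpos_of_nonpos_of_nonneg hi.le (normSq_nonneg _)
      · simp [hy, ext, hi]
    · obtain ⟨i, hi⟩ := Function.ne_iff.1 hc0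
      refine ⟨i.1, Finset.mem_univ _, mul_neg_of_neg_of_pos i.2 (normSq_pos.2 ?_)⟩
      simpa [hy, ext, i.2] using hi
  linarith

/-- Pivot order on the nine positions. -/
def idx (u : Fin 3 × Fin 3) : Fin 9 := (![![0, 5, 1], ![7, 2, 6], ![3, 8, 4]] : Fin 3 → Fin 3 → Fin 9) u.1 u.2

theorem idx_bij : Function.Bijective idx := by
  unfold idx; decide

/-- The pivots. -/
def dv : Fin 9 → ℝ := ![1, 2, 5/2, 6/5, -14/3, 1, -4, 5/4, 16/5]

/-- The unit lower triangular factor. -/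
def Lm : Matrix (Fin 9) (Fin 9) ℂ :=
  !![1, 0, 0, 0, 0, 0, 0, 0, 0;
    -1, 1, 0, 0, 0, 0, 0, 0, 0;
    0, (1/2)*I, 1, 0, 0, 0, 0, 0, 0;
    0, 0, -2/5+(-2/5)*I, 1, 0, 0, 0, 0, 0;
    2, 0, 2/5, -4/3+(-1/3)*I, 1, 0, 0, 0, 0;
    0, 0, 0, 0, 0, 1, 0, 0, 0;
    0, 0, 0, 0, 0, -1+2*I, 1, 0, 0;
    0, 0, 0, 0, 0, 1, -1/4+(-1/2)*I, 1, 0;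
    0, 0, 0, 0, 0, I, 1/2+(-3/4)*I, 4/5-I, 1]

theorem Lm_det : Lm.det = 1 := by
  rw [Matrix.det_of_isLowerTriangular]
  · simp [Lm, Fin.prod_univ_succ]
  · intro i j hij
    fin_cases i <;> fin_cases j <;> first | rfl | (exact absurd hij (by decide))

theorem Nval_eq : Nval 0 (-1 + I) (-1 - I) (-1 + I) (1 - I) 0 1 I I (-1) 0 (-1) 1 0 1 0 (-1 - I) 0 = 17 := by
  simp [Nval, Fintype.sum_prod_type, Fin.sum_univ_succ, oddVec, evenVec, Complex.sq_norm, normSq_apply]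
  norm_num

set_option maxHeartbeats 4000000 in
theorem factor : ptrans rho1 = (Lm * Matrix.diagonal (fun k => ((dv k / 17 : ℝ) : ℂ)) * Lm.conjTranspose).submatrix idx idx := by
  ext ⟨i, j⟩ ⟨k, l⟩
  simp only [ptrans, rho1, rhoM, Nval_eq, Matrix.of_apply, Matrix.smul_apply, sigmaM,
    Matrix.submatrix_apply]
  rw [Matrix.mul_apply]
  simp only [Matrix.mul_diagonal, Matrix.conjTranspose_apply]
  fin_cases i <;> fin_cases j <;> fin_cases k <;> fin_cases l <;>
    (simp [oddVec, evenVec, idx, Lm, dv, Fin.sum_univ_succ, Complex.ext_iff, map_ofNat (starRingEnd ℂ)]; try norm_num)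

theorem stmt9 :
    (ptrans rho1).det = ((2 ^ 6 * 7 / 17 ^ 9 : ℂ)) ∧
    (∃ hH : (ptrans rho1).IsHermitian,
      {w : Fin 3 × Fin 3 | hH.eigenvalues w < 0}.ncard = 2) ∧
    ¬ (ptrans rho1).PosSemidef := by
  have hD : (Matrix.diagonal (fun k => ((dv k / 17 : ℝ) : ℂ))).IsHermitian := by
    rw [Matrix.isHermitian_diagonal_iff]
    intro k
    simp [IsSelfAdjoint]
  have hH : (ptrans rho1).IsHermitian := by
    rw [factor]
    exact (Matrix.isHermitian_mul_mul_conjTranspose Lm hD).submatrix _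
  have hdet : (ptrans rho1).det = ((2 ^ 6 * 7 / 17 ^ 9 : ℂ)) := by
    have := Matrix.det_submatrix_equiv_self (Equiv.ofBijective idx idx_bij)
      (Lm * Matrix.diagonal (fun k => ((dv k / 17 : ℝ) : ℂ)) * Lm.conjTranspose)
    rw [factor]
    refine this.trans ?_
    rw [Matrix.det_mul, Matrix.det_mul, Matrix.det_conjTranspose, Lm_det, Matrix.det_diagonal]
    simp [dv, Fin.prod_univ_succ]
    norm_num
  have hne : ∀ i, hH.eigenvalues i ≠ 0 := by
    intro i hi
    have h0 := hH.det_eq_prod_eigenvalues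
    rw [Finset.prod_eq_zero (Finset.mem_univ i) (by simp [hi]), hdet] at h0
    norm_num at h0
  have hM : Matrix.diagonal (fun i => (hH.eigenvalues i : ℂ)) =
      ((Lm.submatrix idx id).conjTranspose * (hH.eigenvectorUnitary : Matrix (Fin 3 × Fin 3) (Fin 3 × Fin 3) ℂ)).conjTranspose *
        Matrix.diagonal (fun k => ((dv k / 17 : ℝ) : ℂ)) *
        ((Lm.submatrix idx id).conjTranspose * (hH.eigenvectorUnitary : Matrix (Fin 3 × Fin 3) (Fin 3 × Fin 3) ℂ)) := by
    have hf : ptrans rho1 = Lm.submatrix idx id *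
        Matrix.diagonal (fun k => ((dv k / 17 : ℝ) : ℂ)) * (Lm.submatrix idx id).conjTranspose := by
      rw [factor]; rfl
    have hs := hH.conjStarAlgAut_star_eigenvectorUnitary
    rw [Unitary.conjStarAlgAut_star_apply] at hs
    have hs' : Matrix.diagonal (fun i => (hH.eigenvalues i : ℂ)) =
      (hH.eigenvectorUnitary : Matrix (Fin 3 × Fin 3) (Fin 3 × Fin 3) ℂ).conjTranspose * ptrans rho1 *
        (hH.eigenvectorUnitary : Matrix (Fin 3 × Fin 3) (Fin 3 × Fin 3) ℂ) := hs.symm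
    rw [hs', Matrix.conjTranspose_mul, Matrix.conjTranspose_conjTranspose]
    generalize (hH.eigenvectorUnitary : Matrix (Fin 3 × Fin 3) (Fin 3 × Fin 3) ℂ) = U
    rw [hf]
    simp only [Matrix.mul_assoc]
  have hneg := inertia_half hH.eigenvalues (fun k => dv k / 17) _ hM 1
  have hpos := inertia_half hH.eigenvalues (fun k => dv k / 17) _ hM (-1)
  have c1 : Fintype.card {k : Fin 9 // (1:ℝ) * (dv k / 17) < 0} = 2 := by
    rw [Fintype.card_subtype, Finset.card_filter]
    simp only [Fin.sum_univ_succ]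
    simp [dv]
    norm_num
  have c2 : Fintype.card {k : Fin 9 // (-1:ℝ) * (dv k / 17) < 0} = 7 := by
    rw [Fintype.card_subtype, Finset.card_filter]
    simp only [Fin.sum_univ_succ]
    simp [dv]
    norm_num
  rw [c1] at hneg
  rw [c2] at hpos
  have hcompl : Fintype.card {i // (-1:ℝ) * hH.eigenvalues i < 0} =
      9 - Fintype.card {i // (1:ℝ) * hH.eigenvalues i < 0} := by
    have := Fintype.card_subtype_compl (fun i => (1:ℝ) * hH.eigenvalues i < 0)
    simp only [Fintype.card_prod, Fintype.card_fin] at this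
    rw [show 9 = 3 * 3 from rfl, ← this]
    refine Fintype.card_congr (Equiv.subtypeEquivRight fun i => ?_)
    rcases lt_or_gt_of_ne (hne i) with h | h
    · constructor
      · intro; linarith
      · intro; linarith
    · constructor
      · intro _; linarith
      · intro _; linarith
  have hcard : Fintype.card {i // (1:ℝ) * hH.eigenvalues i < 0} = 2 := by omega
  have hn : {w : Fin 3 × Fin 3 | hH.eigenvalues w < 0}.ncard = 2 := by
    rw [← Nat.card_coe_set_eq, Nat.card_eq_fintype_card, ← hcard]
    exact Fintype.card_congr (Equiv.subtypeEquivRight fun i => by simp)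
  refine ⟨hdet, ⟨hH, hn⟩, fun hp => ?_⟩
  have : {w : Fin 3 × Fin 3 | hH.eigenvalues w < 0} = ∅ := by
    ext w
    simpa using hp.eigenvalues_nonneg w
  rw [this] at hn
  simp at hn
end
end

section
/- Let Φ : ℂ¹⁸ → M₉(ℂ) be the map sending the parameter tuple (a,b,c,d,e,f,g,h,i,j,k,l,m,n,p,q,r,s) to the 9×9 matrix Σ_{t=1}^4 v_t v_t†, regarded as a smooth map of real vector spaces ℝ³⁶ → ℝ¹⁶² (real and imaginary parts of the entries). Then the real Fréchet derivative of Φ has rank at most 28 at every point; and at the point a=b=c=f=j=m=p=r=1, n=0, e=−1, q=s=𝐢, g=h=−𝐢, d=1+𝐢, i=−1−𝐢, k=l=−1+𝐢 (𝐢 the imaginary unit) its rank equals 28. -/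
open Complex ComplexConjugate
open scoped ComplexOrder

noncomputable section

/-- Φ : ℂ¹⁸ → M₉(ℂ), sending the 18 parameters to Σ_t v_t v_t†, viewed as a map
between real normed spaces. -/
def Phi : (Fin 18 → ℂ) → ((Fin 3 × Fin 3) → (Fin 3 × Fin 3) → ℂ) := fun P =>
  fun u w =>
    sigmaM (P 0) (P 1) (P 2) (P 3) (P 4) (P 5) (P 6) (P 7) (P 8) (P 9) (P 10)
      (P 11) (P 12) (P 13) (P 14) (P 15) (P 16) (P 17) u w

/-- The linear coordinate maps: the four vectors, evaluated at a position. -/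
def o1 (P : Fin 18 → ℂ) : Fin 3 × Fin 3 → ℂ := oddVec (P 0) (P 1) (P 2) (P 3) (P 4)
def o3 (P : Fin 18 → ℂ) : Fin 3 × Fin 3 → ℂ := oddVec (P 9) (P 10) (P 11) (P 12) (P 13)
def e2 (P : Fin 18 → ℂ) : Fin 3 × Fin 3 → ℂ := evenVec (P 5) (P 6) (P 7) (P 8)
def e4 (P : Fin 18 → ℂ) : Fin 3 × Fin 3 → ℂ := evenVec (P 14) (P 15) (P 16) (P 17)

lemma odd_cases (u : Fin 3 × Fin 3) :
    (∃ i : Fin 5, ∀ x : Fin 5 → ℂ, oddVec (x 0) (x 1) (x 2) (x 3) (x 4) u = x i) ∨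
    (∀ a b c d e : ℂ, oddVec a b c d e u = 0) := by
  unfold oddVec
  split_ifs
  · exact Or.inl ⟨0, fun _ => rfl⟩
  · exact Or.inl ⟨1, fun _ => rfl⟩
  · exact Or.inl ⟨2, fun _ => rfl⟩
  · exact Or.inl ⟨3, fun _ => rfl⟩
  · exact Or.inl ⟨4, fun _ => rfl⟩
  · exact Or.inr fun _ _ _ _ _ => rfl

lemma even_cases (u : Fin 3 × Fin 3) :
    (∃ i : Fin 4, ∀ x : Fin 4 → ℂ, evenVec (x 0) (x 1) (x 2) (x 3) u = x i) ∨
    (∀ a b c d : ℂ, evenVec a b c d u = 0) := by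
  unfold evenVec
  split_ifs
  · exact Or.inl ⟨0, fun _ => rfl⟩
  · exact Or.inl ⟨1, fun _ => rfl⟩
  · exact Or.inl ⟨2, fun _ => rfl⟩
  · exact Or.inl ⟨3, fun _ => rfl⟩
  · exact Or.inr fun _ _ _ _ => rfl

lemma odd_clm (f : Fin 5 → Fin 18) (u : Fin 3 × Fin 3) :
    ∃ L : (Fin 18 → ℂ) →L[ℝ] ℂ, ∀ P : Fin 18 → ℂ,
      oddVec (P (f 0)) (P (f 1)) (P (f 2)) (P (f 3)) (P (f 4)) u = L P := by
  rcases odd_cases u with ⟨i, hi⟩ | h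
  · exact ⟨ContinuousLinearMap.proj (f i), fun P => hi (fun j => P (f j))⟩
  · exact ⟨0, fun P => h _ _ _ _ _⟩

lemma even_clm (f : Fin 4 → Fin 18) (u : Fin 3 × Fin 3) :
    ∃ L : (Fin 18 → ℂ) →L[ℝ] ℂ, ∀ P : Fin 18 → ℂ,
      evenVec (P (f 0)) (P (f 1)) (P (f 2)) (P (f 3)) u = L P := by
  rcases even_cases u with ⟨i, hi⟩ | h
  · exact ⟨ContinuousLinearMap.proj (f i), fun P => hi (fun j => P (f j))⟩
  · exact ⟨0, fun P => h _ _ _ _⟩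

lemma term_deriv (L M : (Fin 18 → ℂ) →L[ℝ] ℂ) (P : Fin 18 → ℂ) :
    HasFDerivAt (fun P => L P * conj (M P))
      (L P • ((conjCLE : ℂ →L[ℝ] ℂ).comp M) + conj (M P) • L) P := by
  have h1 : HasFDerivAt (fun P => L P) L P := L.hasFDerivAt
  have h2 : HasFDerivAt (fun P => conj (M P)) ((conjCLE : ℂ →L[ℝ] ℂ).comp M) P :=
    ((conjCLE : ℂ →L[ℝ] ℂ).comp M).hasFDerivAt
  exact h1.mul h2

lemma fderiv_Phi (P X : Fin 18 → ℂ) (u w : Fin 3 × Fin 3) :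
    fderiv ℝ Phi P X u w =
      (o1 X u * conj (o1 P w) + o1 P u * conj (o1 X w)
        + (o3 X u * conj (o3 P w) + o3 P u * conj (o3 X w)))
      + (e2 X u * conj (e2 P w) + e2 P u * conj (e2 X w)
        + (e4 X u * conj (e4 P w) + e4 P u * conj (e4 X w))) := by
  choose L1 h1 using odd_clm ![0, 1, 2, 3, 4]
  choose L3 h3 using odd_clm ![9, 10, 11, 12, 13]
  choose L2 h2 using even_clm ![5, 6, 7, 8]
  choose L4 h4 using even_clm ![14, 15, 16, 17]
  have g1 : ∀ u P, o1 P u = L1 u P := h1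
  have g2 : ∀ u P, e2 P u = L2 u P := h2
  have g3 : ∀ u P, o3 P u = L3 u P := h3
  have g4 : ∀ u P, e4 P u = L4 u P := h4
  have hPhi : Phi = fun P u w => L1 u P * conj (L1 w P) + L2 u P * conj (L2 w P)
      + L3 u P * conj (L3 w P) + L4 u P * conj (L4 w P) := by
    funext P u w
    rw [← g1, ← g1, ← g2, ← g2, ← g3, ← g3, ← g4, ← g4]
    rfl
  have hd := fun u w => (((term_deriv (L1 u) (L1 w) P).add (term_deriv (L2 u) (L2 w) P)).add
    (term_deriv (L3 u) (L3 w) P)).add (term_deriv (L4 u) (L4 w) P)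
  have hD := hasFDerivAt_pi.2 fun u => hasFDerivAt_pi.2 fun w => hd u w
  have hE : fderiv ℝ Phi P = _ := (congrArg (fun F => fderiv ℝ F P) hPhi).trans hD.fderiv
  rw [hE]
  simp only [g1, g2, g3, g4]
  simp
  ring

/-- Kernel of the derivative of `V ↦ V V†` at an `n × 2` matrix with columns `v`, `w`. -/
lemma ker_lemma {n : ℕ} (hn : 4 ≤ n) (v w : Fin n → ℂ) :
    ∃ L : (ℝ × ℝ × ℂ) →ₗ[ℝ] (Fin n → ℂ) × (Fin n → ℂ), Function.Injective L ∧
      ∀ x i j, (L x).1 i * conj (v j) + v i * conj ((L x).1 j)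
        + ((L x).2 i * conj (w j) + w i * conj ((L x).2 j)) = 0 := by
  have hinj : ∃ J : (ℝ × ℝ × ℂ) →ₗ[ℝ] (Fin n → ℂ), Function.Injective J := by
    refine ⟨LinearMap.pi fun i => if i.val = 0 then
      Complex.ofRealCLM.toLinearMap ∘ₗ LinearMap.fst ℝ ℝ (ℝ × ℂ)
      else if i.val = 1 then
        Complex.ofRealCLM.toLinearMap ∘ₗ LinearMap.fst ℝ ℝ ℂ ∘ₗ LinearMap.snd ℝ ℝ (ℝ × ℂ)
      else LinearMap.snd ℝ ℝ ℂ ∘ₗ LinearMap.snd ℝ ℝ (ℝ × ℂ), ?_⟩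
    rw [← LinearMap.ker_eq_bot, LinearMap.ker_eq_bot']
    rintro ⟨s, t, z⟩ h
    have h0 := congrFun h ⟨0, by omega⟩
    have h1 := congrFun h ⟨1, by omega⟩
    have h2 := congrFun h ⟨2, by omega⟩
    simp at h0 h1 h2
    simp [h0, h1, h2]
  obtain ⟨J, hJ⟩ := hinj
  by_cases hw : ∃ c : ℂ, w = c • v
  · obtain ⟨c, rfl⟩ := hw
    refine ⟨LinearMap.prod ((-conj c) • J) J, ?_, ?_⟩
    · intro x y h
      exact hJ (congrArg Prod.snd h)
    · intro x i j
      simp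
      ring
  by_cases hv : ∃ c : ℂ, v = c • w
  · obtain ⟨c, rfl⟩ := hv
    refine ⟨LinearMap.prod J ((-conj c) • J), ?_, ?_⟩
    · intro x y h
      exact hJ (congrArg Prod.fst h)
    · intro x i j
      simp
      ring
  have hli : ∀ s t : ℂ, s • v + t • w = 0 → s = 0 ∧ t = 0 := by
    intro s t h
    have ht : t = 0 := by
      by_contra ht
      refine hw ⟨-(t⁻¹ * s), ?_⟩
      have : w = t⁻¹ • (t • w) := by rw [smul_smul, inv_mul_cancel₀ ht, one_smul]
      rw [this, eq_neg_of_add_eq_zero_right h, smul_neg, smul_smul, neg_smul]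
    have hs : s = 0 := by
      by_contra hs
      refine hv ⟨-(s⁻¹ * t), ?_⟩
      have : v = s⁻¹ • (s • v) := by rw [smul_smul, inv_mul_cancel₀ hs, one_smul]
      rw [this, eq_neg_of_add_eq_zero_left h, smul_neg, smul_smul, neg_smul]
    exact ⟨hs, ht⟩
  refine ⟨{ toFun := fun x => (((x.1 : ℂ) * I) • v + x.2.2 • w,
              (-conj x.2.2) • v + ((x.2.1 : ℂ) * I) • w)
            map_add' := ?_
            map_smul' := ?_ }, ?_, ?_⟩
  · intro x y
    ext i <;> simp <;> ring
  · intro r x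
    ext i <;> simp <;> ring
  · rw [← LinearMap.ker_eq_bot, LinearMap.ker_eq_bot']
    rintro ⟨s, t, z⟩ h
    have h1 := hli _ _ (congrArg Prod.fst h)
    have h2 := hli _ _ (congrArg Prod.snd h)
    simp at h1 h2
    simp [h1, h2]
  · intro x i j
    simp
    ring

lemma rank_eq (P : Fin 18 → ℂ) :
    LinearMap.rank ((fderiv ℝ Phi P).toLinearMap) =
      (Module.finrank ℝ (LinearMap.range (fderiv ℝ Phi P).toLinearMap) : ℕ) :=
  (Module.finrank_eq_rank ℝ _).symm

lemma rank_nullity (P : Fin 18 → ℂ) :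
    Module.finrank ℝ (LinearMap.range (fderiv ℝ Phi P).toLinearMap) +
      Module.finrank ℝ (LinearMap.ker (fderiv ℝ Phi P).toLinearMap) = 36 := by
  rw [LinearMap.finrank_range_add_finrank_ker, Module.finrank_pi_fintype]
  simp [Complex.finrank_real_complex]

/-- Assemble the 18 parameters from two odd and two even coordinate vectors. -/
def pack : (((Fin 5 → ℂ) × (Fin 5 → ℂ)) × ((Fin 4 → ℂ) × (Fin 4 → ℂ))) →ₗ[ℝ] (Fin 18 → ℂ) where
  toFun x := ![x.1.1 0, x.1.1 1, x.1.1 2, x.1.1 3, x.1.1 4,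
    x.2.1 0, x.2.1 1, x.2.1 2, x.2.1 3,
    x.1.2 0, x.1.2 1, x.1.2 2, x.1.2 3, x.1.2 4,
    x.2.2 0, x.2.2 1, x.2.2 2, x.2.2 3]
  map_add' := by
    intro x y
    ext i
    fin_cases i <;> rfl
  map_smul' := by
    intro r x
    ext i
    fin_cases i <;> rfl

lemma pack_injective : Function.Injective pack := by
  intro x y h
  have hc := fun i => congrFun h i
  refine Prod.ext (Prod.ext ?_ ?_) (Prod.ext ?_ ?_)
  · funext i
    fin_cases i
    exacts [hc 0, hc 1, hc 2, hc 3, hc 4]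
  · funext i
    fin_cases i
    exacts [hc 9, hc 10, hc 11, hc 12, hc 13]
  · funext i
    fin_cases i
    exacts [hc 5, hc 6, hc 7, hc 8]
  · funext i
    fin_cases i
    exacts [hc 14, hc 15, hc 16, hc 17]

lemma o1_pack (x) (u) : o1 (pack x) u = oddVec (x.1.1 0) (x.1.1 1) (x.1.1 2) (x.1.1 3) (x.1.1 4) u := rfl
lemma o3_pack (x) (u) : o3 (pack x) u = oddVec (x.1.2 0) (x.1.2 1) (x.1.2 2) (x.1.2 3) (x.1.2 4) u := rfl
lemma e2_pack (x) (u) : e2 (pack x) u = evenVec (x.2.1 0) (x.2.1 1) (x.2.1 2) (x.2.1 3) u := rfl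
lemma e4_pack (x) (u) : e4 (pack x) u = evenVec (x.2.2 0) (x.2.2 1) (x.2.2 2) (x.2.2 3) u := rfl

lemma ker_ge (P : Fin 18 → ℂ) :
    8 ≤ Module.finrank ℝ (LinearMap.ker (fderiv ℝ Phi P).toLinearMap) := by
  obtain ⟨L, hL, hL0⟩ := ker_lemma (n := 5) (by norm_num) ![P 0, P 1, P 2, P 3, P 4]
    ![P 9, P 10, P 11, P 12, P 13]
  obtain ⟨M, hM, hM0⟩ := ker_lemma (n := 4) (by norm_num) ![P 5, P 6, P 7, P 8]
    ![P 14, P 15, P 16, P 17]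
  have hinj : Function.Injective (pack ∘ₗ LinearMap.prodMap L M) := by
    intro x y h
    have h' := pack_injective h
    exact Prod.ext (hL (congrArg Prod.fst h')) (hM (congrArg Prod.snd h'))
  have hG1 : ∀ x u, o1 ((pack ∘ₗ LinearMap.prodMap L M) x) u = _ := fun x u => o1_pack (L x.1, M x.2) u
  have hG3 : ∀ x u, o3 ((pack ∘ₗ LinearMap.prodMap L M) x) u = _ := fun x u => o3_pack (L x.1, M x.2) u
  have hG2 : ∀ x u, e2 ((pack ∘ₗ LinearMap.prodMap L M) x) u = _ := fun x u => e2_pack (L x.1, M x.2) u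
  have hG4 : ∀ x u, e4 ((pack ∘ₗ LinearMap.prodMap L M) x) u = _ := fun x u => e4_pack (L x.1, M x.2) u
  generalize pack ∘ₗ LinearMap.prodMap L M = G at *
  have hker : ∀ x, G x ∈ LinearMap.ker (fderiv ℝ Phi P).toLinearMap := by
    intro x
    rw [LinearMap.mem_ker]
    change fderiv ℝ Phi P (G x) = 0
    funext u w
    rw [fderiv_Phi]
    have hodd : o1 (G x) u * conj (o1 P w) + o1 P u * conj (o1 (G x) w)
        + (o3 (G x) u * conj (o3 P w) + o3 P u * conj (o3 (G x) w)) = 0 := by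
      rcases odd_cases u with ⟨i, hi⟩ | hu
      · rcases odd_cases w with ⟨j, hj⟩ | hw
        · have a1 : o1 (G x) u = (L x.1).1 i := (hG1 x u).trans (hi (L x.1).1)
          have a2 : o1 (G x) w = (L x.1).1 j := (hG1 x w).trans (hj (L x.1).1)
          have a3 : o3 (G x) u = (L x.1).2 i := (hG3 x u).trans (hi (L x.1).2)
          have a4 : o3 (G x) w = (L x.1).2 j := (hG3 x w).trans (hj (L x.1).2)
          have b1 : o1 P u = _ := hi ![P 0, P 1, P 2, P 3, P 4]
          have b2 : o1 P w = _ := hj ![P 0, P 1, P 2, P 3, P 4]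
          have b3 : o3 P u = _ := hi ![P 9, P 10, P 11, P 12, P 13]
          have b4 : o3 P w = _ := hj ![P 9, P 10, P 11, P 12, P 13]
          rw [a1, a2, a3, a4, b1, b2, b3, b4]
          exact hL0 x.1 i j
        · simp only [hG1, hG3]
          simp [o1, o3, hw]
      · simp only [hG1, hG3]
        simp [o1, o3, hu]
    have heven : e2 (G x) u * conj (e2 P w) + e2 P u * conj (e2 (G x) w)
        + (e4 (G x) u * conj (e4 P w) + e4 P u * conj (e4 (G x) w)) = 0 := by
      rcases even_cases u with ⟨i, hi⟩ | hu
      · rcases even_cases w with ⟨j, hj⟩ | hw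
        · have a1 : e2 (G x) u = (M x.2).1 i := (hG2 x u).trans (hi (M x.2).1)
          have a2 : e2 (G x) w = (M x.2).1 j := (hG2 x w).trans (hj (M x.2).1)
          have a3 : e4 (G x) u = (M x.2).2 i := (hG4 x u).trans (hi (M x.2).2)
          have a4 : e4 (G x) w = (M x.2).2 j := (hG4 x w).trans (hj (M x.2).2)
          have b1 : e2 P u = _ := hi ![P 5, P 6, P 7, P 8]
          have b2 : e2 P w = _ := hj ![P 5, P 6, P 7, P 8]
          have b3 : e4 P u = _ := hi ![P 14, P 15, P 16, P 17]
          have b4 : e4 P w = _ := hj ![P 14, P 15, P 16, P 17]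
          rw [a1, a2, a3, a4, b1, b2, b3, b4]
          exact hM0 x.2 i j
        · simp only [hG2, hG4]
          simp [e2, e4, hw]
      · simp only [hG2, hG4]
        simp [e2, e4, hu]
    rw [hodd, heven]
    simp
  have := LinearMap.finrank_le_finrank_of_injective (f := G.codRestrict _ hker)
    (fun x y h => hinj (congrArg Subtype.val h))
  simpa [Complex.finrank_real_complex] using this

/-- The special point. -/
def P0 : Fin 18 → ℂ :=
  ![1, 1, 1, 1 + I, -1, 1, -I, -I, -1 - I, 1, -1 + I, -1 + I, 1, 0, 1, I, 1, I]

/-- Eight real functionals separating the kernel at `P0`. -/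
def gaugeMap : (Fin 18 → ℂ) →ₗ[ℝ] (Fin 8 → ℝ) where
  toFun X := ![(X 0).re, (X 0).im, (X 9).im, (X 1).im, (X 5).re, (X 5).im, (X 14).im, (X 6).re]
  map_add' := by
    intro x y
    ext i
    fin_cases i <;> simp
  map_smul' := by
    intro r x
    ext i
    fin_cases i <;> simp

lemma ker_le : Module.finrank ℝ (LinearMap.ker (fderiv ℝ Phi P0).toLinearMap) ≤ 8 := by
  have hinj : Function.Injective
      (gaugeMap.domRestrict (LinearMap.ker (fderiv ℝ Phi P0).toLinearMap)) := by
    rw [← LinearMap.ker_eq_bot, LinearMap.ker_eq_bot']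
    rintro ⟨X, hX⟩ hg
    have hD : ∀ u w, fderiv ℝ Phi P0 X u w = 0 := fun u w =>
      congrFun (congrFun (LinearMap.mem_ker.1 hX) u) w
    have hg' : gaugeMap X = 0 := hg
    have q := fun i => congrFun hg' i
    have q0 : (X 0).re = 0 := q 0
    have q1 : (X 0).im = 0 := q 1
    have q2 : (X 9).im = 0 := q 2
    have q3 : (X 1).im = 0 := q 3
    have q4 : (X 5).re = 0 := q 4
    have q5 : (X 5).im = 0 := q 5
    have q6 : (X 14).im = 0 := q 6
    have q7 : (X 6).re = 0 := q 7
    simp only [fderiv_Phi] at hD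
    have key : ∀ u w, _ ∧ _ := fun u w => Complex.ext_iff.1 (hD u w)
    clear hD
    obtain ⟨a1, a2⟩ := key (0, 0) (0, 0)
    obtain ⟨b1, b2⟩ := key (2, 0) (0, 0)
    obtain ⟨c1, c2⟩ := key (2, 0) (2, 0)
    simp [o1, o3, e2, e4, P0, oddVec, evenVec, q0, q1, q2, q3] at a1 a2 b1 b2 c1 c2
    have r9 : (X 9).re = 0 := by linarith
    have r1 : (X 1).re = 0 := by linarith
    have r10 : (X 10).re = 0 := by linarith
    have r10' : (X 10).im = 0 := by linarith
    obtain ⟨d1, d2⟩ := key (1, 1) (0, 0)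
    obtain ⟨d3, d4⟩ := key (1, 1) (2, 0)
    obtain ⟨f1, f2⟩ := key (0, 2) (0, 0)
    obtain ⟨f3, f4⟩ := key (0, 2) (2, 0)
    obtain ⟨g1, g2⟩ := key (2, 2) (0, 0)
    obtain ⟨g3, g4⟩ := key (2, 2) (2, 0)
    simp [o1, o3, e2, e4, P0, oddVec, evenVec, q0, q1, q2, q3, r9, r1, r10, r10'] at d1 d2 d3 d4 f1 f2 f3 f4 g1 g2 g3 g4
    obtain ⟨h1, h2⟩ := key (1, 0) (1, 0)
    obtain ⟨i1, i2⟩ := key (0, 1) (1, 0)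
    obtain ⟨j1, j2⟩ := key (0, 1) (0, 1)
    simp [o1, o3, e2, e4, P0, oddVec, evenVec, q4, q5, q6, q7] at h1 h2 i1 i2 j1 j2
    have s14 : (X 14).re = 0 := by linarith
    have s6 : (X 6).im = 0 := by linarith
    have s15 : (X 15).re = 0 := by linarith
    have s15' : (X 15).im = 0 := by linarith
    obtain ⟨k1, k2⟩ := key (2, 1) (1, 0)
    obtain ⟨k3, k4⟩ := key (2, 1) (0, 1)
    obtain ⟨l1, l2⟩ := key (1, 2) (1, 0)
    obtain ⟨l3, l4⟩ := key (1, 2) (0, 1)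
    simp [o1, o3, e2, e4, P0, oddVec, evenVec, q4, q5, q6, q7, s14, s6, s15, s15'] at k1 k2 k3 k4 l1 l2 l3 l4
    refine Subtype.ext ?_
    funext i
    change X i = 0
    fin_cases i <;> refine Complex.ext ?_ ?_ <;> simp <;> linarith
  have := LinearMap.finrank_le_finrank_of_injective hinj
  simpa using this

theorem stmt17 :
    (∀ P : Fin 18 → ℂ, LinearMap.rank ((fderiv ℝ Phi P).toLinearMap) ≤ 28) ∧
    LinearMap.rank ((fderiv ℝ Phi
      ![1, 1, 1, 1 + I, -1, 1, -I, -I, -1 - I, 1, -1 + I, -1 + I, 1, 0, 1, I, 1, I]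
      ).toLinearMap) = 28 := by
  constructor
  · intro P
    rw [rank_eq]
    have h1 := rank_nullity P
    have h2 := ker_ge P
    have h3 : Module.finrank ℝ (LinearMap.range (fderiv ℝ Phi P).toLinearMap) ≤ 28 := by omega
    exact_mod_cast h3
  · change LinearMap.rank ((fderiv ℝ Phi P0).toLinearMap) = 28
    rw [rank_eq]
    have h1 := rank_nullity P0
    have h2 := ker_ge P0
    have h4 := ker_le
    have h3 : Module.finrank ℝ (LinearMap.range (fderiv ℝ Phi P0).toLinearMap) = 28 := by omega
    exact_mod_cast h3
end
end
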